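/- Define Ñ_* f(x) = sup_{0 < P ≤ c_m} |(1/P) ∫_0^P (Ñ_p f)(x) dp|. There exists a constant C = C(m), independent of N, such that for every nonnegative function f : G → [0, ∞) and every x ∈ G, M_S^L f(x) ≤ C · Ñ_* f(x). -/

import Mathlib

open Finset

noncomputable section

/-- Hamming weight on `(ℤ/(m+1)ℤ)^N`. -/
def hw {m N : ℕ} (y : Fin N → ZMod (m + 1)) : ℕ :=
  (Finset.univ.filter fun i => y i ≠ 0).card

/-- `L¹`-normalized indicator of the sphere of radius `r` (zero if `r < 0` or `r > N`). -/
def sigmaC (m N : ℕ) (r : ℤ) : (Fin N → ZMod (m + 1)) → ℂ := fun x =>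
  if (hw x : ℤ) = r then
    ((Finset.univ.filter fun y : Fin N → ZMod (m + 1) => (hw y : ℤ) = r).card : ℂ)⁻¹
  else 0

/-- Convolution on `(ℤ/(m+1)ℤ)^N`. -/
def convC {m N : ℕ} (g f : (Fin N → ZMod (m + 1)) → ℂ) : (Fin N → ZMod (m + 1)) → ℂ :=
  fun x => ∑ y, g y * f (x - y)

/-- The smooth local spherical maximal function
`M_S^L f (x) = max_{0 ≤ L ≤ c_m N} (1/(L+1)) |Σ_{k=0}^L (σ_k * f)(x)|`.
Note that the integers `L` with `0 ≤ L ≤ c_m·N = m·N/(m+1)` are exactly those with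
`L ≤ ⌊m·N/(m+1)⌋ = (m*N)/(m+1)` (natural division). -/
def smoothLocalMax (m N : ℕ) (f : (Fin N → ZMod (m + 1)) → ℂ) (x : Fin N → ZMod (m + 1)) : ℝ :=
  (Finset.range ((m * N) / (m + 1) + 1)).sup' Finset.nonempty_range_add_one fun L =>
    (1 / ((L : ℝ) + 1)) * ‖∑ k ∈ Finset.range (L + 1), convC (sigmaC m N (k : ℤ)) f x‖


/-- The noise density `μ̃_p^N(y) = (p/m)^{|y|} (1-p)^{N-|y|}`. -/
def noiseDensity (m N : ℕ) (p : ℝ) (y : Fin N → ZMod (m + 1)) : ℝ :=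
  (p / m) ^ hw y * (1 - p) ^ (N - hw y)

/-- The noise operator `Ñ_p f = f * μ̃_p^N`. -/
def noiseOp (m N : ℕ) (p : ℝ) (f : (Fin N → ZMod (m + 1)) → ℂ) :
    (Fin N → ZMod (m + 1)) → ℂ :=
  convC (fun y => (noiseDensity m N p y : ℂ)) f

/-- The reparametrized maximal function `Ñ_* f(x) = sup_{0<P≤c_m} |(1/P)∫_0^P (Ñ_p f)(x) dp|`. -/
def reparamMax (m N : ℕ) (f : (Fin N → ZMod (m + 1)) → ℂ) (x : Fin N → ZMod (m + 1)) : ℝ :=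
  ⨆ P : Set.Ioc (0 : ℝ) ((m : ℝ) / (m + 1)),
    ‖(1 / (P : ℝ)) • ∫ p in (0 : ℝ)..(P : ℝ), noiseOp m N p f x‖

open intervalIntegral in
lemma beta_rec (a b : ℕ) :
    ((a : ℝ) + 1) * ∫ x in (0:ℝ)..1, x ^ a * (1 - x) ^ (b + 1) =
      (b + 1) * ∫ x in (0:ℝ)..1, x ^ (a + 1) * (1 - x) ^ b := by
  have h := integral_mul_deriv_eq_deriv_mul (a := (0:ℝ)) (b := 1)
    (u := fun x : ℝ => (1 - x) ^ (b + 1)) (v := fun x : ℝ => x ^ (a + 1))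
    (u' := fun x : ℝ => -(((b : ℝ) + 1) * (1 - x) ^ b))
    (v' := fun x : ℝ => ((a : ℝ) + 1) * x ^ a)
    (fun x _ => by
      have := ((hasDerivAt_id x).const_sub 1).pow (b + 1)
      have e : ((b + 1 : ℕ) : ℝ) * (1 - id x) ^ (b + 1 - 1) * -1 = -(((b : ℝ) + 1) * (1 - x) ^ b) := by
        simp
      rw [e] at this
      exact this)
    (fun x _ => by
      have := (hasDerivAt_pow (a + 1) x)
      simpa using this)
    ((by fun_prop : Continuous fun x : ℝ => -(((b : ℝ) + 1) * (1 - x) ^ b)).intervalIntegrable _ _)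
    ((by fun_prop : Continuous fun x : ℝ => ((a : ℝ) + 1) * x ^ a).intervalIntegrable _ _)
  rw [← integral_const_mul, ← integral_const_mul]
  have e1 : (∫ x in (0:ℝ)..1, ((a : ℝ) + 1) * (x ^ a * (1 - x) ^ (b + 1))) =
      ∫ x in (0:ℝ)..1, (1 - x) ^ (b + 1) * (((a : ℝ) + 1) * x ^ a) := by
    congr 1; ext x; ring
  rw [e1, h]
  simp only [sub_self, ne_eq, Nat.add_eq_zero_iff, one_ne_zero, and_false, not_false_eq_true,
    zero_pow, zero_mul, mul_zero, sub_zero, zero_sub]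
  rw [← integral_neg]
  congr 1; ext x; ring

lemma beta_val (b a : ℕ) :
    ((a : ℝ) + b + 1) * ((a + b).choose a : ℝ) * ∫ x in (0:ℝ)..1, x ^ a * (1 - x) ^ b = 1 := by
  induction b generalizing a with
  | zero =>
    have : (a : ℝ) + 1 ≠ 0 := by positivity
    simp [integral_pow]
    field_simp
  | succ b ih =>
    have h1 := beta_rec a b
    have h2 := ih (a + 1)
    have h3 := Nat.choose_succ_right_eq (a + b + 1) a
    have h4 : a + b + 1 - a = b + 1 := by omega
    rw [h4] at h3
    have h5 : ((a + b + 1).choose (a + 1) : ℝ) * (a + 1) = (a + b + 1).choose a * (b + 1) := by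
      exact_mod_cast h3
    have e : a + 1 + b = a + b + 1 := by ring
    rw [e] at h2
    rw [← add_assoc]
    push_cast at h2 ⊢
    have ha : (a : ℝ) + 1 ≠ 0 := by positivity
    apply mul_left_cancel₀ ha
    generalize (∫ x in (0:ℝ)..1, x ^ a * (1 - x) ^ (b + 1)) = I at *
    generalize (∫ x in (0:ℝ)..1, x ^ (a + 1) * (1 - x) ^ b) = J at *
    generalize ((a + b + 1).choose a : ℝ) = c at *
    generalize ((a + b + 1).choose (a + 1) : ℝ) = d at *
    linear_combination ((a : ℝ) + b + 1 + 1) * c * h1 - (a + b + 1 + 1) * J * h5 + (a + 1) * h2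

lemma beta_shift (a b : ℕ) :
    ((a : ℝ) + b + 2) * ∫ x in (0:ℝ)..1, x ^ (a + 1) * (1 - x) ^ b =
      (a + 1) * ∫ x in (0:ℝ)..1, x ^ a * (1 - x) ^ b := by
  have h1 := beta_rec a b
  have h2 : (∫ x in (0:ℝ)..1, x ^ a * (1 - x) ^ (b + 1)) =
      (∫ x in (0:ℝ)..1, x ^ a * (1 - x) ^ b) - ∫ x in (0:ℝ)..1, x ^ (a + 1) * (1 - x) ^ b := by
    rw [← intervalIntegral.integral_sub]
    · congr 1; ext x; ring
    · exact (by fun_prop : Continuous fun x : ℝ => x ^ a * (1 - x) ^ b).intervalIntegrable _ _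
    · exact (by fun_prop : Continuous fun x : ℝ => x ^ (a+1) * (1 - x) ^ b).intervalIntegrable _ _
  rw [h2] at h1
  linarith

lemma refl_ineq (a b : ℕ) (P Q t : ℝ) (hQ : 0 < Q) (hPQ : Q ≤ P) (hab : a * Q ≤ b * P)
    (ht : 0 ≤ t) (htQ : t ≤ Q) :
    (P + t) ^ a * (Q - t) ^ b ≤ (P - t) ^ a * (Q + t) ^ b := by
  have hP : 0 < P := hQ.trans_le hPQ
  rcases Nat.eq_zero_or_pos b with rfl | hb
  · have : a = 0 := by
      by_contra h
      have : (0:ℝ) < a := by exact_mod_cast Nat.pos_of_ne_zero h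
      have : 0 < a * Q := by positivity
      simp at hab
      linarith
    subst this; simp
  rcases htQ.eq_or_lt with rfl | htQ
  · rw [sub_self, zero_pow hb.ne', mul_zero]
    have : 0 ≤ P - t := by linarith
    positivity
  have htP : t < P := by linarith
  have hx : |t / Q| < 1 := by
    rw [abs_of_nonneg (by positivity), div_lt_one hQ]; exact htQ
  have hy : |t / P| < 1 := by
    rw [abs_of_nonneg (by positivity), div_lt_one hP]; exact htP
  have sx := (Real.hasSum_log_sub_log_of_abs_lt_one hx).mul_left (b : ℝ)
  have sy := (Real.hasSum_log_sub_log_of_abs_lt_one hy).mul_left (a : ℝ)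
  have key := hasSum_le (fun j => by
    have e1 : (a : ℝ) * (t / P) ≤ b * (t / Q) := by
      rw [mul_div_assoc', mul_div_assoc', div_le_div_iff₀ hP hQ]
      nlinarith
    have e2 : (t / P) ^ (2 * j) ≤ (t / Q) ^ (2 * j) := by gcongr
    have e3 : ((a : ℝ) * (t / P)) * (t / P) ^ (2 * j) ≤ (b * (t / Q)) * (t / Q) ^ (2 * j) :=
      mul_le_mul e1 e2 (by positivity) (by positivity)
    have e4 : (0:ℝ) ≤ 2 * (1 / (2 * j + 1)) := by positivity
    have := mul_le_mul_of_nonneg_left e3 e4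
    rw [pow_succ, pow_succ]
    linarith) sy sx
  have e1 : Real.log (1 + t / Q) = Real.log (Q + t) - Real.log Q := by
    rw [← Real.log_div (by positivity) hQ.ne']; congr 1; field_simp
  have e2 : Real.log (1 - t / Q) = Real.log (Q - t) - Real.log Q := by
    rw [← Real.log_div (by linarith) hQ.ne']; congr 1; field_simp
  have e3 : Real.log (1 + t / P) = Real.log (P + t) - Real.log P := by
    rw [← Real.log_div (by positivity) hP.ne']; congr 1; field_simp
  have e4 : Real.log (1 - t / P) = Real.log (P - t) - Real.log P := by
    rw [← Real.log_div (by linarith) hP.ne']; congr 1; field_simp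
  rw [e1, e2, e3, e4] at key
  have p1 : 0 < P - t := by linarith
  have p2 : 0 < Q - t := by linarith
  have p3 : 0 < P + t := by linarith
  have p4 : 0 < Q + t := by linarith
  rw [← Real.log_le_log_iff (by positivity) (by positivity),
    Real.log_mul (by positivity) (by positivity), Real.log_mul (by positivity) (by positivity),
    Real.log_pow, Real.log_pow, Real.log_pow, Real.log_pow]
  linarith

lemma w_int (a b : ℕ) (u v : ℝ) :
    IntervalIntegrable (fun x : ℝ => x ^ a * (1 - x) ^ b) MeasureTheory.volume u v :=
  (by fun_prop : Continuous fun x : ℝ => x ^ a * (1 - x) ^ b).intervalIntegrable _ _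

lemma w_mono (a b : ℕ) (u v u' v' : ℝ) (h1 : 0 ≤ u') (h2 : u' ≤ u) (h3 : u ≤ v) (h4 : v ≤ v')
    (h5 : v' ≤ 1) :
    (∫ x in u..v, x ^ a * (1 - x) ^ b) ≤ ∫ x in u'..v', x ^ a * (1 - x) ^ b := by
  apply intervalIntegral.integral_mono_interval h2 h3 h4 _ (w_int a b _ _)
  filter_upwards [MeasureTheory.ae_restrict_mem measurableSet_Ioc] with x hx
  have : 0 ≤ x := by linarith [hx.1]
  have : 0 ≤ 1 - x := by linarith [hx.2]
  simp only [Pi.zero_apply]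
  positivity

lemma half_refl (a b : ℕ) (P : ℝ) (hP : 1 / 2 ≤ P) (hP1 : P < 1) (hab : a * (1 - P) ≤ b * P) :
    (∫ x in (0:ℝ)..1, x ^ a * (1 - x) ^ b) ≤ 2 * ∫ x in (0:ℝ)..P, x ^ a * (1 - x) ^ b := by
  have hs := intervalIntegral.integral_add_adjacent_intervals (w_int a b 0 P) (w_int a b P 1)
  have h1 : (∫ x in P..1, x ^ a * (1 - x) ^ b) ≤ ∫ x in (0:ℝ)..P, x ^ a * (1 - x) ^ b := by
    have e1 := intervalIntegral.integral_comp_add_left (a := 0) (b := 1 - P)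
      (fun x : ℝ => x ^ a * (1 - x) ^ b) P
    have e2 := intervalIntegral.integral_comp_sub_left (a := 0) (b := 1 - P)
      (fun x : ℝ => x ^ a * (1 - x) ^ b) P
    rw [add_zero, add_sub_cancel] at e1
    rw [sub_zero] at e2
    rw [← e1]
    refine le_trans ?_ (w_mono a b (P - (1 - P)) P 0 P le_rfl (by linarith) (by linarith) le_rfl
      hP1.le)
    rw [← e2]
    apply intervalIntegral.integral_mono_on (by linarith)
    · exact (by fun_prop : Continuous fun x : ℝ =>
        (P + x) ^ a * (1 - (P + x)) ^ b).intervalIntegrable _ _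
    · exact (by fun_prop : Continuous fun x : ℝ =>
        (P - x) ^ a * (1 - (P - x)) ^ b).intervalIntegrable _ _
    · intro t ht
      have := refl_ineq a b P (1 - P) t (by linarith) (by linarith) hab ht.1 ht.2
      convert this using 3 <;> ring
  linarith

lemma half_markov (a b : ℕ) (P : ℝ) (hP : 2 * (a + 1) ≤ P * (a + b + 2)) (hP0 : 0 < P)
    (hP1 : P < 1) :
    (∫ x in (0:ℝ)..1, x ^ a * (1 - x) ^ b) ≤ 2 * ∫ x in (0:ℝ)..P, x ^ a * (1 - x) ^ b := by
  have hs := intervalIntegral.integral_add_adjacent_intervals (w_int a b 0 P) (w_int a b P 1)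
  have h1 : P * (∫ x in P..1, x ^ a * (1 - x) ^ b) ≤ ∫ x in (0:ℝ)..1, x ^ (a+1) * (1 - x) ^ b := by
    refine le_trans ?_ (w_mono (a+1) b P 1 0 1 le_rfl hP0.le hP1.le le_rfl le_rfl)
    rw [← intervalIntegral.integral_const_mul]
    apply intervalIntegral.integral_mono_on hP1.le
    · exact (w_int a b _ _).const_mul _
    · exact w_int (a+1) b _ _
    · intro x hx
      have h0 : 0 ≤ x := by linarith [hx.1]
      have h2 : 0 ≤ 1 - x := by linarith [hx.2]
      have h3 : 0 ≤ x ^ a * (1 - x) ^ b := by positivity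
      have := mul_le_mul_of_nonneg_right hx.1 h3
      rw [pow_succ]
      linarith
  have h2 := beta_shift a b
  have h3 : 0 ≤ ∫ x in (0:ℝ)..1, x ^ a * (1 - x) ^ b := by
    have := w_mono a b 0 0 0 1 le_rfl le_rfl le_rfl zero_le_one le_rfl
    simpa using this
  set I := ∫ x in (0:ℝ)..1, x ^ a * (1 - x) ^ b
  set J := ∫ x in (0:ℝ)..1, x ^ (a+1) * (1 - x) ^ b
  set K := ∫ x in P..1, x ^ a * (1 - x) ^ b
  have hn : (0:ℝ) < a + b + 2 := by positivity
  have h4 : (P * (a + b + 2)) * (2 * K) ≤ (P * (a + b + 2)) * I := by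
    calc (P * (a + b + 2)) * (2 * K) = 2 * ((a + b + 2) * (P * K)) := by ring
      _ ≤ 2 * ((a + b + 2) * J) := by gcongr
      _ = (2 * (a + 1)) * I := by rw [h2]; ring
      _ ≤ _ := by gcongr
  have h5 := le_of_mul_le_mul_left h4 (by positivity)
  linarith

lemma key_lemma (m N L : ℕ) (hm : 2 ≤ m) (hL : L ≤ (m * N) / (m + 1)) (hN : 1 ≤ N) :
    ∃ P ∈ Set.Ioc (0:ℝ) ((m : ℝ) / (m + 1)), ∀ k ≤ L,
      1 / ((L : ℝ) + 1) ≤ 6 * ((N.choose k : ℝ) * (1 / P * ∫ p in (0:ℝ)..P, p ^ k * (1 - p) ^ (N - k))) := by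
  have hmR : (2:ℝ) ≤ m := by exact_mod_cast hm
  have hc : (2:ℝ) / 3 ≤ (m : ℝ) / (m + 1) := by
    rw [div_le_div_iff₀ (by norm_num) (by positivity)]; linarith
  have hc1 : (m : ℝ) / (m + 1) < 1 := by
    rw [div_lt_one (by positivity)]; linarith
  have hL' : L * (m + 1) ≤ m * N := (Nat.le_div_iff_mul_le (by omega)).1 hL
  have hLN : L ≤ N := by nlinarith
  have hLR : (L : ℝ) * (m + 1) ≤ m * N := by exact_mod_cast hL'
  -- common finish
  have fin : ∀ P : ℝ, 0 < P → P * (N + 1) ≤ 3 * (L + 1) → ∀ k ≤ L,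
      (∫ x in (0:ℝ)..1, x ^ k * (1 - x) ^ (N - k)) ≤
        2 * ∫ x in (0:ℝ)..P, x ^ k * (1 - x) ^ (N - k) →
      1 / ((L : ℝ) + 1) ≤
        6 * ((N.choose k : ℝ) * (1 / P * ∫ p in (0:ℝ)..P, p ^ k * (1 - p) ^ (N - k))) := by
    intro P hP hPN k hk hh
    have hb := beta_val (N - k) k
    have e : k + (N - k) = N := by omega
    have eR : (k : ℝ) + ((N - k : ℕ) : ℝ) = N := by exact_mod_cast e
    rw [e, eR] at hb
    generalize (∫ x in (0:ℝ)..1, x ^ k * (1 - x) ^ (N - k)) = I at *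
    generalize (∫ x in (0:ℝ)..P, x ^ k * (1 - x) ^ (N - k)) = J at *
    have h1 : 1 ≤ (N + 1) * (N.choose k : ℝ) * (2 * J) := by
      refine hb.symm.le.trans ?_
      exact mul_le_mul_of_nonneg_left hh (by positivity)
    rw [div_le_iff₀ (by positivity)]
    have h2 : 6 * ((N.choose k : ℝ) * (1 / P * J)) * (L + 1) =
      (N.choose k : ℝ) * (2 * J) * (3 * (L + 1)) / P := by field_simp; ring
    rw [h2, le_div_iff₀ hP, one_mul]
    have hN1 : (0:ℝ) < N + 1 := by positivity
    have h3 : 0 ≤ (N.choose k : ℝ) * (2 * J) := by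
      by_contra hneg
      push Not at hneg
      nlinarith
    calc P ≤ P * ((N + 1) * (N.choose k : ℝ) * (2 * J)) := by
          exact le_mul_of_one_le_right hP.le h1
      _ = (N.choose k : ℝ) * (2 * J) * (P * (N + 1)) := by ring
      _ ≤ _ := by gcongr
  by_cases hcase : 3 * (L + 1) ≤ N + 2
  · have hcR : 3 * ((L : ℝ) + 1) ≤ N + 2 := by exact_mod_cast hcase
    have hP0 : (0:ℝ) < 2 * (L + 1) / (N + 2) := by positivity
    have hP2 : (2:ℝ) * (L + 1) / (N + 2) ≤ 2 / 3 := by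
      rw [div_le_div_iff₀ (by positivity) (by norm_num)]; linarith
    refine ⟨2 * (L + 1) / (N + 2), ⟨hP0, hP2.trans hc⟩, fun k hk => ?_⟩
    have hPN : (2:ℝ) * (L + 1) / (N + 2) * (N + 2) = 2 * (L + 1) := by field_simp
    apply fin _ hP0 (by nlinarith) k hk
    apply half_markov _ _ _ _ hP0 (by linarith)
    have e : k + (N - k) = N := by omega
    have eR : (k : ℝ) + ((N - k : ℕ) : ℝ) = N := by exact_mod_cast e
    rw [eR, hPN]
    have : (k : ℝ) ≤ L := by exact_mod_cast hk
    linarith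
  · have hcR : (N : ℝ) + 2 < 3 * ((L : ℝ) + 1) := by exact_mod_cast not_le.1 hcase
    have hP0 : (0:ℝ) < (m : ℝ) / (m + 1) := by linarith
    refine ⟨(m : ℝ) / (m + 1), ⟨hP0, le_rfl⟩, fun k hk => ?_⟩
    apply fin _ hP0 (by nlinarith) k hk
    apply half_refl _ _ _ (by linarith) hc1
    have hkL : (k : ℝ) ≤ L := by exact_mod_cast hk
    have e : k + (N - k) = N := by omega
    have eR : ((N - k : ℕ) : ℝ) = N - k := by rw [← (by exact_mod_cast e : (k : ℝ) + ((N - k : ℕ) : ℝ) = N)]; ring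
    rw [eR]
    have h6 : (k : ℝ) ≤ m / (m + 1) * N := by
      rw [div_mul_eq_mul_div, le_div_iff₀ (by positivity)]
      nlinarith
    linarith

lemma sphere_card (m N k : ℕ) :
    (Finset.univ.filter fun y : Fin N → ZMod (m + 1) => hw y = k).card = N.choose k * m ^ k := by
  have h := Finset.card_eq_sum_card_fiberwise
    (s := Finset.univ.filter fun y : Fin N → ZMod (m + 1) => hw y = k)
    (t := Finset.powersetCard k (Finset.univ : Finset (Fin N)))
    (f := fun y => Finset.univ.filter fun i => y i ≠ 0) (by
      intro y hy
      simp only [coe_filter, mem_univ, true_and, Set.mem_setOf_eq] at hy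
      simp only [mem_coe, mem_powersetCard, subset_univ, true_and]
      exact hy)
  rw [h]
  have : ∀ s ∈ Finset.powersetCard k (Finset.univ : Finset (Fin N)),
      ((Finset.univ.filter fun y : Fin N → ZMod (m + 1) => hw y = k).filter
        fun y => (Finset.univ.filter fun i => y i ≠ 0) = s).card = m ^ k := by
    intro s hs
    rw [mem_powersetCard] at hs
    have e : ((Finset.univ.filter fun y : Fin N → ZMod (m + 1) => hw y = k).filter
        fun y => (Finset.univ.filter fun i => y i ≠ 0) = s) =
        Fintype.piFinset (fun i => if i ∈ s then (Finset.univ : Finset (ZMod (m+1))).erase 0 else {0}) := by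
      ext y
      simp only [mem_filter, mem_univ, true_and, Fintype.mem_piFinset]
      constructor
      · rintro ⟨_, rfl⟩ i
        by_cases hi : y i = 0 <;> simp [hi]
      · intro hy
        have : (Finset.univ.filter fun i => y i ≠ 0) = s := by
          ext i
          have := hy i
          by_cases hi : i ∈ s <;> simp_all
        refine ⟨?_, this⟩
        unfold hw
        rw [this]; exact hs.2
    rw [e, Fintype.card_piFinset]
    have : ∀ i, (if i ∈ s then (Finset.univ : Finset (ZMod (m+1))).erase 0 else {0}).card =
        if i ∈ s then m else 1 := by
      intro i
      split_ifs
      · rw [Finset.card_erase_of_mem (mem_univ _), Finset.card_univ, ZMod.card]; rfl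
      · simp
    simp_rw [this]
    rw [Finset.prod_ite_mem]
    simp [hs.2]
  rw [Finset.sum_congr rfl this]
  simp

lemma hw_le {m N : ℕ} (y : Fin N → ZMod (m + 1)) : hw y ≤ N := by
  unfold hw
  exact (Finset.card_le_univ _).trans (by simp)

lemma noise_real (m N : ℕ) (p : ℝ) (f : (Fin N → ZMod (m + 1)) → ℝ) (x) :
    noiseOp m N p (fun y => (f y : ℂ)) x =
      ((∑ y, noiseDensity m N p y * f (x - y) : ℝ) : ℂ) := by
  unfold noiseOp convC
  push_cast
  rfl

lemma dens_cont (m N : ℕ) (y : Fin N → ZMod (m + 1)) :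
    Continuous fun p : ℝ => noiseDensity m N p y := by
  unfold noiseDensity
  fun_prop

lemma avg_eq (m N : ℕ) (P : ℝ) (f : (Fin N → ZMod (m + 1)) → ℝ) (x) :
    (1 / P) • (∫ p in (0 : ℝ)..P, noiseOp m N p (fun y => (f y : ℂ)) x) =
      ((∑ y, (1 / P * ∫ p in (0:ℝ)..P, noiseDensity m N p y) * f (x - y) : ℝ) : ℂ) := by
  simp_rw [noise_real]
  rw [intervalIntegral.integral_ofReal, Complex.real_smul, ← Complex.ofReal_mul]
  congr 1
  rw [intervalIntegral.integral_finsetSum]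
  · rw [Finset.mul_sum]
    refine Finset.sum_congr rfl fun y _ => ?_
    rw [intervalIntegral.integral_mul_const]
    ring
  · intro y _
    exact ((dens_cont m N y).mul continuous_const).intervalIntegrable _ _

lemma bdd (m N : ℕ) (hm : 2 ≤ m) (f : (Fin N → ZMod (m + 1)) → ℝ) (hf : ∀ x, 0 ≤ f x) (x) :
    BddAbove (Set.range fun P : Set.Ioc (0 : ℝ) ((m : ℝ) / (m + 1)) =>
      ‖(1 / (P : ℝ)) • ∫ p in (0 : ℝ)..(P : ℝ), noiseOp m N p (fun y => (f y : ℂ)) x‖) := by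
  refine ⟨∑ y, f (x - y), ?_⟩
  rintro _ ⟨⟨P, hP0, hP⟩, rfl⟩
  have hmR : (2:ℝ) ≤ m := by exact_mod_cast hm
  have hc1 : (m : ℝ) / (m + 1) < 1 := by
    rw [div_lt_one (by positivity)]; linarith
  simp only
  have h : ‖∫ p in (0 : ℝ)..P, noiseOp m N p (fun y => (f y : ℂ)) x‖ ≤
      (∑ y, f (x - y)) * |P - 0| := by
    apply intervalIntegral.norm_integral_le_of_norm_le_const
    intro p hp
    rw [Set.uIoc_of_le hP0.le] at hp
    have hp0 : 0 ≤ p := hp.1.le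
    have hp1 : 0 ≤ 1 - p := by linarith [hp.2]
    have hd : ∀ y : Fin N → ZMod (m+1), 0 ≤ noiseDensity m N p y := fun y => by
      unfold noiseDensity; positivity
    rw [noise_real, Complex.norm_real, Real.norm_of_nonneg
      (Finset.sum_nonneg fun y _ => mul_nonneg (hd y) (hf _))]
    refine Finset.sum_le_sum fun y _ => mul_le_of_le_one_left (hf _) ?_
    unfold noiseDensity
    have hpm : p / m ≤ 1 := by
      rw [div_le_one (by linarith)]; linarith [hp.2]
    exact mul_le_one₀ (pow_le_one₀ (by positivity) hpm) (by positivity)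
      (pow_le_one₀ hp1 (by linarith))
  rw [norm_smul, Real.norm_of_nonneg (by positivity)]
  rw [sub_zero, abs_of_pos hP0] at h
  rw [one_div, inv_mul_le_iff₀ hP0]
  linarith

lemma sph_eq (m N L : ℕ) (f : (Fin N → ZMod (m + 1)) → ℝ) (x) :
    (∑ k ∈ Finset.range (L + 1), convC (sigmaC m N (k : ℤ)) (fun y => (f y : ℂ)) x) =
      ((∑ y, (if hw y ≤ L then ((N.choose (hw y) : ℝ) * m ^ (hw y))⁻¹ else 0) * f (x - y) : ℝ) : ℂ) := by
  unfold convC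
  rw [Finset.sum_comm]
  push_cast
  refine Finset.sum_congr rfl fun y _ => ?_
  rw [← Finset.sum_mul]
  congr 1
  unfold sigmaC
  simp only [Nat.cast_inj]
  rw [Finset.sum_ite_eq]
  simp only [Finset.mem_range, Nat.lt_succ_iff, sphere_card]
  split_ifs <;> push_cast <;> rfl

theorem statement5 (m : ℕ) (hm : 2 ≤ m) :
    ∃ C : ℝ, ∀ N : ℕ, 1 ≤ N → ∀ f : (Fin N → ZMod (m + 1)) → ℝ, (∀ x, 0 ≤ f x) →
      ∀ x, smoothLocalMax m N (fun y => (f y : ℂ)) x ≤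
        C * reparamMax m N (fun y => (f y : ℂ)) x := by
  refine ⟨6, fun N hN f hf x => ?_⟩
  unfold smoothLocalMax
  apply Finset.sup'_le
  intro L hL
  rw [Finset.mem_range, Nat.lt_succ_iff] at hL
  obtain ⟨P, hP, hk⟩ := key_lemma m N L hm hL hN
  have hmR : (2:ℝ) ≤ m := by exact_mod_cast hm
  have hc1 : (m : ℝ) / (m + 1) < 1 := by
    rw [div_lt_one (by positivity)]; linarith
  have h1 := le_ciSup (bdd m N hm f hf x) ⟨P, hP⟩
  refine le_trans ?_ (mul_le_mul_of_nonneg_left h1 (by norm_num))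
  have hP0 : 0 < P := hP.1
  simp only
  rw [avg_eq, sph_eq, Complex.norm_real, Complex.norm_real, Real.norm_of_nonneg, Real.norm_of_nonneg,
    Finset.mul_sum, Finset.mul_sum]
  · refine Finset.sum_le_sum fun y _ => ?_
    rw [← mul_assoc, ← mul_assoc]
    refine mul_le_mul_of_nonneg_right ?_ (hf _)
    split_ifs with hy
    · have h2 := hk _ hy
      have e : (∫ p in (0:ℝ)..P, noiseDensity m N p y) =
          ((m : ℝ) ^ hw y)⁻¹ * ∫ p in (0:ℝ)..P, p ^ hw y * (1 - p) ^ (N - hw y) := by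
        rw [← intervalIntegral.integral_const_mul]
        congr 1; ext p
        unfold noiseDensity
        rw [div_pow]; ring
      rw [e]
      have hch : (0:ℝ) < N.choose (hw y) := by exact_mod_cast Nat.choose_pos (hw_le y)
      have hmp : (0:ℝ) < (m:ℝ) ^ hw y := by positivity
      have h3 := mul_le_mul_of_nonneg_right h2
        (inv_nonneg.2 (mul_pos hch hmp).le)
      refine h3.trans (le_of_eq ?_)
      field_simp
    · rw [mul_zero]
      have : 0 ≤ ∫ p in (0:ℝ)..P, noiseDensity m N p y := by
        apply intervalIntegral.integral_nonneg hP0.le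
        intro p hp
        have hp0 : 0 ≤ p := hp.1
        have hp1 : 0 ≤ 1 - p := by linarith [hp.2, hP.2]
        unfold noiseDensity
        positivity
      positivity
  · refine Finset.sum_nonneg fun y _ => mul_nonneg ?_ (hf _)
    have : 0 ≤ ∫ p in (0:ℝ)..P, noiseDensity m N p y := by
      apply intervalIntegral.integral_nonneg hP0.le
      intro p hp
      have hp0 : 0 ≤ p := hp.1
      have hp1 : 0 ≤ 1 - p := by linarith [hp.2, hP.2]
      unfold noiseDensity
      positivity
    positivity
  · refine Finset.sum_nonneg fun y _ => mul_nonneg ?_ (hf _)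
    split_ifs <;> positivity
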